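/- Assume the set 𝒵 of ℝ^C-valued random variables satisfies: for all t > 0, Z ∈ 𝒵 if and only if tZ ∈ 𝒵. Let g(z) = zᵀAz for a positive definite matrix A ∈ ℝ^{C×C}, and let l^MUH(z,y) = (1/C)Σ_i z_i − z_y. Then the regularized loss l^MUH + g is robust to uniform label noise: for every Z̄* ∈ argmin_{Z∈𝒵} E[l^MUH(Z,Ȳ) + g(Z)], there exists Z* ∈ argmin_{Z∈𝒵} E[l^MUH(Z,Y) + g(Z)] with pred(Z̄*) = pred(Z*) almost surely. Concretely, with λ = 1/(1 − ρC/(C−1)), the random variable λZ̄* is such a minimizer of the clean regularized risk. -/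

import Mathlib

open MeasureTheory Matrix

/-- `Ybar` is a uniformly noisy version of `Y` at noise level `ρ` (expectation form of
`P(Ȳ=i | Y,X) = ρ/(C−1)` for `i ≠ Y` and `1−ρ` for `i = Y`). -/
def UniformLabelNoise {Ω 𝒳 : Type*} [MeasurableSpace Ω] (P : Measure Ω) (C : ℕ) (ρ : ℝ)
    (X : Ω → 𝒳) (Y Ybar : Ω → Fin C) : Prop :=
  ∀ h : 𝒳 → Fin C → ℝ,
    Integrable (fun ω => h (X ω) (Ybar ω)) P →
    Integrable (fun ω => h (X ω) (Y ω)) P →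
    (∀ i, Integrable (fun ω => h (X ω) i) P) →
    ∫ ω, h (X ω) (Ybar ω) ∂P =
      (1 - ρ) * ∫ ω, h (X ω) (Y ω) ∂P
        + (ρ / ((C : ℝ) - 1)) * ∫ ω, (∑ i : Fin C, if i = Y ω then 0 else h (X ω) i) ∂P

/-- The Multi-Category Unhinged loss `l^MUH(z,y) = (1/C)Σ_i z_i − z_y`. -/
noncomputable def lMUH (C : ℕ) (z : Fin C → ℝ) (y : Fin C) : ℝ :=
  (1 / (C : ℝ)) * ∑ i, z i - z y

/-- The set of predictions `argmax_i z_i` of an output vector `z`. -/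
def predSet (C : ℕ) (z : Fin C → ℝ) : Set (Fin C) := {i | ∀ j, z j ≤ z i}

/-!
The losses `l^MUH(z, 1), …, l^MUH(z, C)` sum to zero, so uniform label noise merely multiplies the
expected loss by `κ = 1 - ρC/(C-1) > 0`. The loss is homogeneous of degree `1` in `z`; if the
regularizer is homogeneous of degree `p ≠ 1`, rescaling outputs by the `λ` with `λ ^ (p - 1) = 1/κ`
restores the balance between the two terms: the clean risk of `λZ` is `λ/κ` times the noisy risk
of `Z`. Since `𝒵` is a cone, `Z ↦ λZ` carries minimizers of the noisy risk to minimizers of the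
clean risk, and it does not move the argmax.
-/

/-- The regularized risk `E[l(Z, Y) + g(Z)]`, as a function of the output `Z` for given labels `Y`,
so that a risk minimizer over a class of outputs is expressed by `IsMinOn`. -/
noncomputable def regularizedRisk {Ω E ι : Type*} [MeasurableSpace Ω] (P : Measure Ω)
    (l : E → ι → ℝ) (g : E → ℝ) (Y : Ω → ι) (Z : Ω → E) : ℝ :=
  ∫ ω, l (Z ω) (Y ω) + g (Z ω) ∂P

/-- The factor `κ = 1 - ρC/(C-1)` by which uniform label noise at level `ρ` scales the expected
loss, when the losses of each output sum to zero over the `C` labels. -/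
noncomputable def noiseFactor (C : ℕ) (ρ : ℝ) : ℝ :=
  1 - ρ * C / ((C : ℝ) - 1)

theorem noiseFactor_pos {C : ℕ} {ρ : ℝ} (hC : 2 ≤ C) (hρ : ρ < ((C : ℝ) - 1) / C) :
    0 < noiseFactor C ρ := by
  have hC' : (2 : ℝ) ≤ C := by exact_mod_cast hC
  rw [lt_div_iff₀ (by linarith)] at hρ
  rwa [noiseFactor, sub_pos, div_lt_one (by linarith)]

theorem sum_lMUH {C : ℕ} (hC : C ≠ 0) (z : Fin C → ℝ) : ∑ i, lMUH C z i = 0 := by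
  have hC' : (C : ℝ) ≠ 0 := Nat.cast_ne_zero.mpr hC
  simp only [lMUH, Finset.sum_sub_distrib, Finset.sum_const, Finset.card_univ, Fintype.card_fin,
    nsmul_eq_mul]
  rw [← mul_assoc, mul_one_div_cancel hC', one_mul, sub_self]

theorem lMUH_smul (C : ℕ) (t : ℝ) (z : Fin C → ℝ) (y : Fin C) :
    lMUH C (t • z) y = t * lMUH C z y := by
  simp only [lMUH, Pi.smul_apply, smul_eq_mul, ← Finset.mul_sum]
  ring

theorem predSet_smul (C : ℕ) {t : ℝ} (ht : 0 < t) (z : Fin C → ℝ) :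
    predSet C (t • z) = predSet C z := by
  ext i
  simp only [predSet, Set.mem_ofPred_eq, Pi.smul_apply, smul_eq_mul, mul_le_mul_iff_right₀ ht]

theorem smul_dotProduct_mulVec_smul {R n : Type*} [CommSemiring R] [Fintype n]
    (A : Matrix n n R) (t : R) (z : n → R) :
    (t • z) ⬝ᵥ A *ᵥ (t • z) = t ^ 2 * (z ⬝ᵥ A *ᵥ z) := by
  simp only [mulVec_smul, smul_dotProduct, dotProduct_smul, smul_eq_mul]
  ring

theorem sum_ite_eq_zero_of_sum_eq_zero {ι M : Type*} [Fintype ι] [DecidableEq ι] [AddCommGroup M]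
    {a : ι → M} (ha : ∑ i, a i = 0) (j : ι) : (∑ i, if i = j then 0 else a i) = -a j := by
  rw [eq_neg_iff_add_eq_zero, ← Fintype.sum_ite_eq' j a, ← Finset.sum_add_distrib]
  exact (Finset.sum_congr rfl fun i _ => by split_ifs <;> simp).trans ha

theorem regularizedRisk_smul {Ω E ι : Type*} [MeasurableSpace Ω] [SMul ℝ E] {P : Measure Ω}
    {l : E → ι → ℝ} {g : E → ℝ} {Y : Ω → ι} {Z : Ω → E} {t c : ℝ}
    (hl : ∀ z y, l (t • z) y = t * l z y) (hg : ∀ z, g (t • z) = c * g z)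
    (hlZ : Integrable (fun ω => l (Z ω) (Y ω)) P) (hgZ : Integrable (fun ω => g (Z ω)) P) :
    regularizedRisk P l g Y (t • Z) = t * ∫ ω, l (Z ω) (Y ω) ∂P + c * ∫ ω, g (Z ω) ∂P := by
  simp only [regularizedRisk, Pi.smul_apply, hl, hg]
  rw [integral_add (hlZ.const_mul t) (hgZ.const_mul c), integral_const_mul, integral_const_mul]

namespace UniformLabelNoise

variable {Ω 𝒳 : Type*} [MeasurableSpace Ω] {P : Measure Ω} {C : ℕ} {ρ : ℝ}
  {X : Ω → 𝒳} {Y Ybar : Ω → Fin C}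

theorem integral_eq_noiseFactor_mul (hnoise : UniformLabelNoise P C ρ X Y Ybar) (hC : C ≠ 1)
    {h : 𝒳 → Fin C → ℝ} (hsum : ∀ x, ∑ i, h x i = 0)
    (hYbar : Integrable (fun ω => h (X ω) (Ybar ω)) P)
    (hY : Integrable (fun ω => h (X ω) (Y ω)) P)
    (hi : ∀ i, Integrable (fun ω => h (X ω) i) P) :
    ∫ ω, h (X ω) (Ybar ω) ∂P = noiseFactor C ρ * ∫ ω, h (X ω) (Y ω) ∂P := by
  have hC' : (C : ℝ) - 1 ≠ 0 := sub_ne_zero.mpr (Nat.cast_ne_one.mpr hC)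
  rw [hnoise h hYbar hY hi]
  simp only [sum_ite_eq_zero_of_sum_eq_zero (hsum _), integral_neg, noiseFactor]
  field_simp
  ring

variable {E : Type*} {l : E → Fin C → ℝ} {g : E → ℝ} {t : ℝ}

theorem noiseFactor_mul_regularizedRisk_smul [SMul ℝ E] (hnoise : UniformLabelNoise P C ρ X Y Ybar)
    (hC : C ≠ 1) (hsum : ∀ z, ∑ i, l z i = 0) {c : ℝ}
    (hl : ∀ z y, l (t • z) y = t * l z y) (hg : ∀ z, g (t • z) = c * g z)
    (hc : noiseFactor C ρ * c = t) {Z : Ω → E} (hZ : Z ∈ Set.range fun f : 𝒳 → E => f ∘ X)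
    (hYbar : Integrable (fun ω => l (Z ω) (Ybar ω)) P)
    (hY : Integrable (fun ω => l (Z ω) (Y ω)) P)
    (hi : ∀ i, Integrable (fun ω => l (Z ω) i) P)
    (hgZ : Integrable (fun ω => g (Z ω)) P) :
    noiseFactor C ρ * regularizedRisk P l g Y (t • Z) = t * regularizedRisk P l g Ybar Z := by
  have hnoisy : ∫ ω, l (Z ω) (Ybar ω) ∂P = noiseFactor C ρ * ∫ ω, l (Z ω) (Y ω) ∂P := by
    obtain ⟨f, rfl⟩ := hZ
    exact hnoise.integral_eq_noiseFactor_mul hC (h := fun x => l (f x)) (fun x => hsum (f x))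
      hYbar hY hi
  rw [regularizedRisk_smul hl hg hY hgZ, regularizedRisk, integral_add hYbar hgZ, hnoisy]
  linear_combination (∫ ω, g (Z ω) ∂P) * hc

theorem isMinOn_regularizedRisk_smul [MulAction ℝ E] (hnoise : UniformLabelNoise P C ρ X Y Ybar)
    (hC : C ≠ 1) (hκ : 0 < noiseFactor C ρ) (hsum : ∀ z, ∑ i, l z i = 0) (ht : 0 < t) {c : ℝ}
    (hl : ∀ z y, l (t • z) y = t * l z y) (hg : ∀ z, g (t • z) = c * g z)
    (hc : noiseFactor C ρ * c = t) {𝒵 : Set (Ω → E)}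
    (h𝒵 : 𝒵 ⊆ Set.range fun f : 𝒳 → E => f ∘ X) (hscale : ∀ Z ∈ 𝒵, t⁻¹ • Z ∈ 𝒵)
    (hYbar : ∀ Z ∈ 𝒵, Integrable (fun ω => l (Z ω) (Ybar ω)) P)
    (hY : ∀ Z ∈ 𝒵, Integrable (fun ω => l (Z ω) (Y ω)) P)
    (hi : ∀ Z ∈ 𝒵, ∀ i, Integrable (fun ω => l (Z ω) i) P)
    (hg𝒵 : ∀ Z ∈ 𝒵, Integrable (fun ω => g (Z ω)) P)
    {Zbar : Ω → E} (hZbar : Zbar ∈ 𝒵) (hmin : IsMinOn (regularizedRisk P l g Ybar) 𝒵 Zbar) :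
    IsMinOn (regularizedRisk P l g Y) 𝒵 (t • Zbar) := by
  have hrisk : ∀ Z ∈ 𝒵, noiseFactor C ρ * regularizedRisk P l g Y (t • Z) =
      t * regularizedRisk P l g Ybar Z := fun Z hZ =>
    hnoise.noiseFactor_mul_regularizedRisk_smul hC hsum hl hg hc (h𝒵 hZ) (hYbar Z hZ) (hY Z hZ)
      (hi Z hZ) (hg𝒵 Z hZ)
  refine isMinOn_iff.mpr fun W hW => le_of_mul_le_mul_left ?_ hκ
  calc noiseFactor C ρ * regularizedRisk P l g Y (t • Zbar)
      = t * regularizedRisk P l g Ybar Zbar := hrisk Zbar hZbar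
    _ ≤ t * regularizedRisk P l g Ybar (t⁻¹ • W) :=
        mul_le_mul_of_nonneg_left (isMinOn_iff.mp hmin _ (hscale W hW)) ht.le
    _ = noiseFactor C ρ * regularizedRisk P l g Y (t • t⁻¹ • W) := (hrisk _ (hscale W hW)).symm
    _ = noiseFactor C ρ * regularizedRisk P l g Y W := by rw [smul_inv_smul₀ ht.ne']

end UniformLabelNoise

theorem mul_rpow_one_div_rpow {κ p : ℝ} (hκ : 0 < κ) (hp : p ≠ 1) :
    κ * ((1 / κ) ^ (p - 1)⁻¹) ^ p = (1 / κ) ^ (p - 1)⁻¹ := by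
  have hpow : ((1 / κ) ^ (p - 1)⁻¹) ^ (p - 1) = 1 / κ :=
    Real.rpow_inv_rpow (one_div_pos.mpr hκ).le (sub_ne_zero.mpr hp)
  rw [Real.rpow_sub_one (by positivity), div_eq_div_iff (by positivity) hκ.ne', one_mul] at hpow
  rw [mul_comm, hpow]

theorem stmt4_general {Ω 𝒳 : Type*} [MeasurableSpace Ω] {P : Measure Ω}
    {C : ℕ} (hC : 2 ≤ C) {ρ : ℝ} (hρ : ρ < ((C : ℝ) - 1) / C)
    {X : Ω → 𝒳} {Y Ybar : Ω → Fin C} (hnoise : UniformLabelNoise P C ρ X Y Ybar)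
    {g : (Fin C → ℝ) → ℝ} {p : ℝ} (hp : p ≠ 1) (hg : ∀ t : ℝ, 0 < t → ∀ z, g (t • z) = t ^ p * g z)
    {𝒵 : Set (Ω → Fin C → ℝ)} (h𝒵 : 𝒵 ⊆ Set.range fun f : 𝒳 → Fin C → ℝ => f ∘ X)
    (hscale : ∀ t : ℝ, 0 < t → ∀ Z ∈ 𝒵, t • Z ∈ 𝒵)
    (hYbar : ∀ Z ∈ 𝒵, Integrable (fun ω => lMUH C (Z ω) (Ybar ω)) P)
    (hY : ∀ Z ∈ 𝒵, Integrable (fun ω => lMUH C (Z ω) (Y ω)) P)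
    (hi : ∀ Z ∈ 𝒵, ∀ i, Integrable (fun ω => lMUH C (Z ω) i) P)
    (hg𝒵 : ∀ Z ∈ 𝒵, Integrable (fun ω => g (Z ω)) P)
    {lam : ℝ} (hlam : lam = (1 / noiseFactor C ρ) ^ (p - 1)⁻¹)
    {Zbar : Ω → Fin C → ℝ} (hZbar : Zbar ∈ 𝒵)
    (hmin : IsMinOn (regularizedRisk P (lMUH C) g Ybar) 𝒵 Zbar) :
    lam • Zbar ∈ 𝒵 ∧ IsMinOn (regularizedRisk P (lMUH C) g Y) 𝒵 (lam • Zbar) ∧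
      ∀ ω, predSet C (Zbar ω) = predSet C (lam • Zbar ω) := by
  have hκ : 0 < noiseFactor C ρ := noiseFactor_pos hC hρ
  have hlam_pos : 0 < lam := hlam ▸ Real.rpow_pos_of_pos (one_div_pos.mpr hκ) _
  have hbalance : noiseFactor C ρ * lam ^ p = lam := hlam ▸ mul_rpow_one_div_rpow hκ hp
  exact ⟨hscale lam hlam_pos Zbar hZbar,
    hnoise.isMinOn_regularizedRisk_smul (by lia) hκ (sum_lMUH (by lia)) hlam_pos (lMUH_smul C lam)
      (hg lam hlam_pos) hbalance h𝒵 (hscale lam⁻¹ (inv_pos.mpr hlam_pos)) hYbar hY hi hg𝒵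
      hZbar hmin,
    fun ω => (predSet_smul C hlam_pos (Zbar ω)).symm⟩

/-- Theorem 2 of the paper: if `𝒵` is closed under positive scaling and
`g(z) = zᵀAz` with `A` positive definite, then `l^MUH + g` is robust to uniform label
noise; concretely, for `λ = 1/(1 − ρC/(C−1))`, if `Z̄*` minimizes the noisy regularized
risk over `𝒵` then `λZ̄* ∈ 𝒵` minimizes the clean regularized risk and has almost surely
the same predictions as `Z̄*`. -/
theorem stmt4
    {Ω 𝒳 : Type*} [MeasurableSpace Ω] [MeasurableSpace 𝒳]
    (P : Measure Ω) [IsProbabilityMeasure P]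
    (C : ℕ) (hC : 2 ≤ C) (ρ : ℝ) (hρ0 : 0 ≤ ρ) (hρ : ρ < ((C : ℝ) - 1) / C)
    (X : Ω → 𝒳) (Y Ybar : Ω → Fin C)
    (hX : Measurable X) (hY : Measurable Y) (hYbar : Measurable Ybar)
    (hnoise : UniformLabelNoise P C ρ X Y Ybar)
    (A : Matrix (Fin C) (Fin C) ℝ) (hA : A.PosDef)
    (g : (Fin C → ℝ) → ℝ) (hg : ∀ z, g z = z ⬝ᵥ A.mulVec z)
    (𝒵 : Set (Ω → Fin C → ℝ))
    (h𝒵 : ∀ Z ∈ 𝒵, ∃ f : 𝒳 → Fin C → ℝ, Measurable f ∧ Z = fun ω => f (X ω))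
    (hscale : ∀ t : ℝ, 0 < t → ∀ Z : Ω → Fin C → ℝ, Z ∈ 𝒵 ↔ (fun ω => t • Z ω) ∈ 𝒵)
    (hint1 : ∀ Z ∈ 𝒵, Integrable (fun ω => lMUH C (Z ω) (Ybar ω)) P)
    (hint2 : ∀ Z ∈ 𝒵, Integrable (fun ω => lMUH C (Z ω) (Y ω)) P)
    (hint3 : ∀ Z ∈ 𝒵, ∀ i, Integrable (fun ω => lMUH C (Z ω) i) P)
    (hint4 : ∀ Z ∈ 𝒵, Integrable (fun ω => g (Z ω)) P)
    (lam : ℝ) (hlam : lam = 1 / (1 - ρ * C / ((C : ℝ) - 1))) :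
    ∀ Zbar ∈ 𝒵,
      (∀ W ∈ 𝒵,
        (∫ ω, lMUH C (Zbar ω) (Ybar ω) + g (Zbar ω) ∂P) ≤
          ∫ ω, lMUH C (W ω) (Ybar ω) + g (W ω) ∂P) →
      ((fun ω => lam • Zbar ω) ∈ 𝒵 ∧
        (∀ W ∈ 𝒵,
          (∫ ω, lMUH C (lam • Zbar ω) (Y ω) + g (lam • Zbar ω) ∂P) ≤
            ∫ ω, lMUH C (W ω) (Y ω) + g (W ω) ∂P) ∧
        ∀ᵐ ω ∂P, predSet C (Zbar ω) = predSet C (lam • Zbar ω)) := by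
  have hg_hom (t : ℝ) (_ : 0 < t) (z : Fin C → ℝ) : g (t • z) = t ^ (2 : ℝ) * g z := by
    rw [hg, hg, smul_dotProduct_mulVec_smul, Real.rpow_two]
  have hfactor : 𝒵 ⊆ Set.range fun f : 𝒳 → Fin C → ℝ => f ∘ X := fun Z hZ =>
    (h𝒵 Z hZ).imp fun _ hf => hf.2.symm
  exact fun Zbar hZbar hmin => (stmt4_general hC hρ hnoise (by norm_num) hg_hom hfactor
    (fun t ht Z => (hscale t ht Z).mp) hint1 hint2 hint3 hint4 (by norm_num [hlam, noiseFactor])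
    hZbar hmin).imp_right (And.imp_right .of_forall)
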